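/- (Chudnovsky-type theorem for ℙ¹×ℙ¹.) Let P₁,…,P_s be mutually distinct points of X = ℙ¹×ℙ¹ and let I = I(P₁) ∩ … ∩ I(P_s) be the radical ideal of their union. Then for every m ≥ 1, α*(I^{(m)})/m ≥ α*(I)/2; equivalently, 2·α*(I^{(m)}) ≥ m·α*(I). -/

import Mathlib

open MvPolynomial

noncomputable section

/-- The bi-graded polynomial ring `ℂ[x₀,x₁,y₀,y₁]`:
the first `Fin 2` summand indexes the variables `x₀,x₁`,
the second the variables `y₀,y₁`. -/
abbrev R4 : Type := MvPolynomial (Fin 2 ⊕ Fin 2) ℂ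

/-- The weight function giving the bi-grading of `R4`. -/
def biWeight : Fin 2 ⊕ Fin 2 → ℕ × ℕ := Sum.elim (fun _ => (1, 0)) (fun _ => (0, 1))

/-- `F` is a (possibly zero) form of bidegree `(p,q)`, i.e. homogeneous of degree `p`
in `x₀,x₁` and homogeneous of degree `q` in `y₀,y₁`. -/
def IsBiForm (F : R4) (p q : ℕ) : Prop :=
  IsWeightedHomogeneous biWeight F (p, q)

/-- The projective line `ℙ¹` over `ℂ`. -/
abbrev ProjLine := Projectivization ℂ (Fin 2 → ℂ)

/-- The bi-homogeneous prime ideal of a point `P = ([a:b],[c:d])` of `X = ℙ¹ × ℙ¹`,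
generated by `b·x₀ - a·x₁` and `d·y₀ - c·y₁`. -/
def pointIdeal (P : ProjLine × ProjLine) : Ideal R4 :=
  Ideal.span
    { C (P.1.rep 1) * X (Sum.inl 0) - C (P.1.rep 0) * X (Sum.inl 1),
      C (P.2.rep 1) * X (Sum.inr 0) - C (P.2.rep 0) * X (Sum.inr 1) }

/-- The `m`-th symbolic power of the radical ideal of the finite set of points `Z ⊂ X`:
`I^{(m)} = ⋂_{P ∈ Z} I(P)^m`.  For `m = 1` this is the radical ideal `I = I(Z)` itself. -/
def symbPow (Z : Finset (ProjLine × ProjLine)) (m : ℕ) : Ideal R4 :=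
  ⨅ P ∈ Z, pointIdeal P ^ m

/-- `α*(J)`: the least `t ≥ 0` such that `J` contains a nonzero form of bidegree `(t,t)`. -/
def alphaStar (J : Ideal R4) : ℕ :=
  sInf {t : ℕ | ∃ F ∈ J, F ≠ 0 ∧ IsBiForm F t t}

/-- `α⁺(J)`: the least `d ≥ 0` such that `J` contains a nonzero form of bidegree `(p,q)`
with `p + q = d`. -/
def alphaPlus (J : Ideal R4) : ℕ :=
  sInf {d : ℕ | ∃ p q : ℕ, p + q = d ∧ ∃ F ∈ J, F ≠ 0 ∧ IsBiForm F p q}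

abbrev A2 : Type := MvPolynomial (Fin 2) ℂ

def boxV (p q : ℕ) : Submodule ℂ A2 := restrictSupport ℂ {v | v 0 ≤ p ∧ v 1 ≤ q}

lemma mem_boxV {p q : ℕ} {f : A2} :
    f ∈ boxV p q ↔ degreeOf 0 f ≤ p ∧ degreeOf 1 f ≤ q := by
  rw [boxV, mem_restrictSupport_iff, degreeOf_le_iff, degreeOf_le_iff]
  constructor
  · intro h
    exact ⟨fun m hm => (h hm).1, fun m hm => (h hm).2⟩
  · intro h m hm
    exact ⟨h.1 m hm, h.2 m hm⟩

def boxEquiv (p q : ℕ) :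
    ({v : Fin 2 →₀ ℕ | v 0 ≤ p ∧ v 1 ≤ q} : Set (Fin 2 →₀ ℕ)) ≃ Fin (p+1) × Fin (q+1) where
  toFun v := (⟨v.1 0, Nat.lt_succ_of_le v.2.1⟩, ⟨v.1 1, Nat.lt_succ_of_le v.2.2⟩)
  invFun w := ⟨Finsupp.equivFunOnFinite.symm ![w.1, w.2], by
    simp only [Set.mem_ofPred_eq, Finsupp.equivFunOnFinite_symm_apply_apply, Matrix.cons_val_zero,
      Matrix.cons_val_one]
    omega⟩
  left_inv v := by
    ext i
    fin_cases i <;> simp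
  right_inv w := by
    ext <;> simp

lemma finite_boxV (p q : ℕ) : Module.Finite ℂ (boxV p q) :=
  Module.Finite.of_basis ((basisRestrictSupport ℂ _).reindex (boxEquiv p q))

lemma finrank_boxV (p q : ℕ) : Module.finrank ℂ (boxV p q) = (p+1)*(q+1) := by
  rw [boxV, Module.finrank_eq_card_basis ((basisRestrictSupport ℂ _).reindex (boxEquiv p q))]
  simp

lemma mul_mem_boxV {p q p' q' : ℕ} {f g : A2} (hf : f ∈ boxV p q) (hg : g ∈ boxV p' q') :
    f * g ∈ boxV (p+p') (q+q') := by
  rw [mem_boxV] at *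
  exact ⟨(degreeOf_mul_le 0 f g).trans (add_le_add hf.1 hg.1),
    (degreeOf_mul_le 1 f g).trans (add_le_add hf.2 hg.2)⟩

lemma boxV_mono {p q p' q' : ℕ} (h : p ≤ p') (h' : q ≤ q') : boxV p q ≤ boxV p' q' := by
  intro f hf
  rw [mem_boxV] at *
  exact ⟨hf.1.trans h, hf.2.trans h'⟩

lemma exists_boxV_surj {T : Type} [AddCommGroup T] [Module ℂ T] [FiniteDimensional ℂ T]
    (π : A2 →ₗ[ℂ] T) (hπ : Function.Surjective π) :
    ∃ N, ∀ t, ∃ f ∈ boxV N N, π f = t := by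
  let b := Module.finBasis ℂ T
  choose f hf using fun i => hπ (b i)
  refine ⟨∑ i, (degreeOf 0 (f i) + degreeOf 1 (f i)), fun t => ⟨∑ i, b.repr t i • f i, ?_, ?_⟩⟩
  · refine Submodule.sum_mem _ fun i _ => Submodule.smul_mem _ _ ?_
    have := Finset.single_le_sum (f := fun i => degreeOf 0 (f i) + degreeOf 1 (f i))
      (fun _ _ => Nat.zero_le _) (Finset.mem_univ i)
    rw [mem_boxV]
    omega
  · simp only [map_sum, map_smul, hf]
    exact b.sum_repr t

lemma bezout_aux (F G : A2) (hG : G ≠ 0) (h : IsRelPrime F G)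
    {T : Type} [AddCommGroup T] [Module ℂ T] [FiniteDimensional ℂ T]
    (π : A2 →ₗ[ℂ] T) (hπ : Function.Surjective π)
    (hπF : ∀ u, π (u * F) = 0) (hπG : ∀ u, π (u * G) = 0) :
    Module.finrank ℂ T ≤ degreeOf 0 F * degreeOf 1 G + degreeOf 0 G * degreeOf 1 F := by
  obtain ⟨N, hN⟩ := exists_boxV_surj π hπ
  have := finite_boxV
  set d1 := degreeOf 0 F with hd1
  set d2 := degreeOf 1 F with hd2
  set a1 := degreeOf 0 G with ha1
  set a2 := degreeOf 1 G with ha2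
  let V := boxV (N+d1+a1) (N+d2+a2)
  let U1 := boxV (N+a1) (N+a2)
  let U2 := boxV (N+d1) (N+d2)
  let K := boxV N N
  have hFm : F ∈ boxV d1 d2 := mem_boxV.2 ⟨le_rfl, le_rfl⟩
  have hGm : G ∈ boxV a1 a2 := mem_boxV.2 ⟨le_rfl, le_rfl⟩
  let μ : (U1 × U2) →ₗ[ℂ] A2 :=
    ((LinearMap.mulRight ℂ F).domRestrict U1).coprod ((LinearMap.mulRight ℂ G).domRestrict U2)
  have hμ : ∀ x : U1 × U2, μ x = x.1.1 * F + x.2.1 * G := fun x => by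
    simp [μ, LinearMap.coprod_apply]
  have hμV : ∀ x, μ x ∈ V := by
    intro x
    rw [hμ]
    refine Submodule.add_mem _ ?_ ?_
    · exact boxV_mono (by omega) (by omega) (mul_mem_boxV x.1.2 hFm)
    · exact boxV_mono (by omega) (by omega) (mul_mem_boxV x.2.2 hGm)
  let πV := π.domRestrict V
  have hs : Function.Surjective πV := by
    intro t
    obtain ⟨f, hf, rfl⟩ := hN t
    exact ⟨⟨f, boxV_mono (by omega) (by omega) hf⟩, rfl⟩
  let μV : (U1 × U2) →ₗ[ℂ] V := μ.codRestrict V hμV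
  have hle : LinearMap.range μV ≤ LinearMap.ker πV := by
    rintro _ ⟨x, rfl⟩
    rw [LinearMap.mem_ker]
    change π (μ x) = 0
    rw [hμ, map_add, hπF, hπG, add_zero]
  -- syzygies
  let ρ : K →ₗ[ℂ] (U1 × U2) := LinearMap.prod
    (((LinearMap.mulRight ℂ G).domRestrict K).codRestrict U1
      (fun x => mul_mem_boxV x.2 hGm))
    (((LinearMap.mulRight ℂ (-F)).domRestrict K).codRestrict U2
      (fun x => mul_mem_boxV x.2 (Submodule.neg_mem _ hFm)))
  have hker : LinearMap.ker μV ≤ LinearMap.range ρ := by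
    rintro ⟨⟨x, hx⟩, ⟨y, hy⟩⟩ hxy
    have hxy' : x * F + y * G = 0 := by
      have h1 := congrArg Subtype.val (LinearMap.mem_ker.1 hxy)
      change μ _ = 0 at h1
      rwa [hμ] at h1
    have hdiv : G ∣ x := by
      refine h.symm.dvd_of_dvd_mul_right (y := x) (z := F) ⟨-y, ?_⟩
      linear_combination hxy'
    obtain ⟨z, rfl⟩ := hdiv
    have hyz : y = -F * z := by
      apply mul_right_cancel₀ hG
      linear_combination hxy'
    have hz : z ∈ K := by
      by_cases hz0 : z = 0
      · rw [hz0]; exact Submodule.zero_mem _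
      · have h2 := mem_boxV.1 hx
        rw [degreeOf_mul_eq hG hz0, degreeOf_mul_eq hG hz0] at h2
        exact mem_boxV.2 ⟨by omega, by omega⟩
    refine ⟨⟨z, hz⟩, ?_⟩
    apply Prod.ext
    · apply Subtype.ext
      change z * G = G * z
      ring
    · apply Subtype.ext
      change z * (-F) = y
      rw [hyz]; ring
  have e1 := LinearMap.finrank_range_add_finrank_ker πV
  rw [LinearMap.range_eq_top.2 hs, finrank_top, finrank_boxV] at e1
  have e2 := LinearMap.finrank_range_add_finrank_ker μV
  rw [Module.finrank_prod, finrank_boxV, finrank_boxV] at e2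
  have e3 := Submodule.finrank_mono hle
  have e4 := (Submodule.finrank_mono hker).trans (LinearMap.finrank_range_le ρ)
  rw [finrank_boxV] at e4
  nlinarith

def maxI (P : Fin 2 → ℂ) : Ideal A2 := Ideal.span (Set.range fun i => X i - C (P i))

def shiftEquiv (P : Fin 2 → ℂ) : A2 ≃ₐ[ℂ] A2 :=
  AlgEquiv.ofAlgHom (aeval fun i => X i + C (P i)) (aeval fun i => X i - C (P i))
    (by ext i : 1; simp) (by ext i : 1; simp)

lemma map_maxI (P : Fin 2 → ℂ) :
    (maxI P).map (shiftEquiv P : A2 →+* A2) = idealOfVars (Fin 2) ℂ := by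
  rw [maxI, Ideal.map_span, ← Set.range_comp, idealOfVars]
  congr 2
  ext i : 1
  simp [shiftEquiv]

lemma mem_maxI_pow (P : Fin 2 → ℂ) (m : ℕ) (f : A2) :
    f ∈ maxI P ^ m ↔ shiftEquiv P f ∈ idealOfVars (Fin 2) ℂ ^ m := by
  rw [← map_maxI P, ← Ideal.map_pow]
  constructor
  · intro h
    exact Ideal.mem_map_of_mem (shiftEquiv P : A2 →+* A2) h
  · intro h
    obtain ⟨g, hg, hgf⟩ := (Ideal.mem_map_iff_of_surjective (shiftEquiv P : A2 →+* A2)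
      (shiftEquiv P).surjective).1 h
    have : g = f := (shiftEquiv P).injective hgf
    rwa [← this]

lemma mem_maxI_iff (P : Fin 2 → ℂ) (f : A2) : f ∈ maxI P ↔ eval P f = 0 := by
  have h := mem_maxI_pow P 1 f
  rw [pow_one, mem_pow_idealOfVars_iff'] at h
  rw [h]
  have h0 : coeff 0 (shiftEquiv P f) = eval P f := by
    rw [← constantCoeff_eq]
    have : (constantCoeff : A2 →+* ℂ).comp (shiftEquiv P : A2 →+* A2) = eval P := by
      ext i <;> simp [shiftEquiv]
    exact congrArg (fun φ => φ f) this
  rw [← h0]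
  constructor
  · intro h
    exact h 0 (by simp)
  · intro h x hx
    have : x = 0 := by
      rw [Nat.lt_one_iff] at hx
      exact (Finsupp.degree_eq_zero_iff x).1 hx
    rw [this, h]

abbrev lowIdx (m : ℕ) : Finset (Fin 2 →₀ ℕ) :=
  (Finset.range m).biUnion fun k => Finset.finsuppAntidiag Finset.univ k

lemma mem_lowIdx {m : ℕ} {v : Fin 2 →₀ ℕ} : v ∈ lowIdx m ↔ Finsupp.degree v < m := by
  simp [lowIdx, Finset.mem_finsuppAntidiag, Finsupp.degree_eq_sum]

lemma card_lowIdx_succ (m : ℕ) : (lowIdx (m+1)).card = (lowIdx m).card + (m+1) := by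
  rw [lowIdx, Finset.range_add_one, Finset.biUnion_insert, Finset.card_union_of_disjoint, add_comm]
  · congr 1
    rw [Finset.card_finsuppAntidiag_nat_eq_choose]
    simp [add_comm 1 m]
  · rw [Finset.disjoint_left]
    intro v hv hv'
    rw [mem_lowIdx] at hv'
    simp [Finset.mem_finsuppAntidiag] at hv
    simp [Finsupp.degree_eq_sum] at hv'
    omega

def taylor (P : Fin 2 → ℂ) (m : ℕ) : A2 →ₗ[ℂ] (lowIdx m → ℂ) :=
  LinearMap.pi fun v => (lcoeff ℂ v.1).comp (shiftEquiv P).toLinearMap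

lemma taylor_surj (P : Fin 2 → ℂ) (m : ℕ) : Function.Surjective (taylor P m) := by
  intro w
  refine ⟨(shiftEquiv P).symm (∑ v, monomial v.1 (w v)), ?_⟩
  ext v
  simp [taylor, coeff_monomial]

lemma ker_taylor (P : Fin 2 → ℂ) (m : ℕ) :
    LinearMap.ker (taylor P m) = (maxI P ^ m).restrictScalars ℂ := by
  ext f
  rw [Submodule.restrictScalars_mem, mem_maxI_pow, mem_pow_idealOfVars_iff', LinearMap.mem_ker,
    funext_iff]
  simp only [← mem_lowIdx]
  exact ⟨fun h x hx => h ⟨x, hx⟩, fun h x => h x.1 x.2⟩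

def quotTaylor (P : Fin 2 → ℂ) (m : ℕ) : (A2 ⧸ maxI P ^ m) ≃ₗ[ℂ] (lowIdx m → ℂ) :=
  (Submodule.Quotient.restrictScalarsEquiv ℂ (maxI P ^ m)).symm.trans <|
  (Submodule.quotEquivOfEq _ _ (ker_taylor P m).symm).trans <|
    (taylor P m).quotKerEquivOfSurjective (taylor_surj P m)

instance (P : Fin 2 → ℂ) (m : ℕ) : FiniteDimensional ℂ (A2 ⧸ maxI P ^ m) :=
  Module.Finite.equiv (quotTaylor P m).symm

lemma finrank_quot (P : Fin 2 → ℂ) (m : ℕ) :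
    Module.finrank ℂ (A2 ⧸ maxI P ^ m) = (lowIdx m).card := by
  rw [(quotTaylor P m).finrank_eq]
  simp

instance finite_loc (P : Fin 2 → ℂ) (m : ℕ) (G : A2) :
    FiniteDimensional ℂ (A2 ⧸ (maxI P ^ m ⊔ Ideal.span {G})) :=
  Module.Finite.of_surjective
    (Ideal.Quotient.factorₐ ℂ (le_sup_left : maxI P ^ m ≤ maxI P ^ m ⊔ Ideal.span {G})).toLinearMap
    (Ideal.Quotient.factor_surjective le_sup_left)

lemma finrank_loc (P : Fin 2 → ℂ) (m : ℕ) (G : A2) (hG : G ∈ maxI P) :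
    m ≤ Module.finrank ℂ (A2 ⧸ (maxI P ^ m ⊔ Ideal.span {G})) := by
  rcases m with _ | n
  · exact Nat.zero_le _
  let J := maxI P ^ (n+1) ⊔ Ideal.span {G}
  let q : (A2 ⧸ maxI P ^ (n+1)) →ₗ[ℂ] (A2 ⧸ J) :=
    (Ideal.Quotient.factorₐ ℂ (le_sup_left : maxI P ^ (n+1) ≤ J)).toLinearMap
  have hq : Function.Surjective q := Ideal.Quotient.factor_surjective le_sup_left
  -- multiplication by G
  let μ0 : A2 →ₗ[ℂ] (A2 ⧸ maxI P ^ (n+1)) :=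
    (Ideal.Quotient.mkₐ ℂ (maxI P ^ (n+1))).toLinearMap.comp (LinearMap.mulRight ℂ G)
  have hμ0 : ∀ f, μ0 f = Ideal.Quotient.mk _ (f * G) := fun f => rfl
  have hk : (maxI P ^ n).restrictScalars ℂ ≤ LinearMap.ker μ0 := by
    intro f hf
    rw [LinearMap.mem_ker, hμ0, Ideal.Quotient.eq_zero_iff_mem, pow_succ]
    exact Ideal.mul_mem_mul hf hG
  let μ := (Submodule.liftQ _ μ0 hk).comp
    (Submodule.Quotient.restrictScalarsEquiv ℂ (maxI P ^ n)).symm.toLinearMap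
  have hle : LinearMap.ker q ≤ LinearMap.range μ := by
    intro x hx
    obtain ⟨f, rfl⟩ := Ideal.Quotient.mk_surjective x
    rw [LinearMap.mem_ker] at hx
    change Ideal.Quotient.mk J f = 0 at hx
    rw [Ideal.Quotient.eq_zero_iff_mem, Submodule.mem_sup] at hx
    obtain ⟨u, hu, v, hv, rfl⟩ := hx
    obtain ⟨w, rfl⟩ := Ideal.mem_span_singleton'.1 hv
    refine ⟨Ideal.Quotient.mk _ w, ?_⟩
    change Ideal.Quotient.mk (maxI P ^ (n+1)) (w * G) = _
    rw [map_add, Ideal.Quotient.eq_zero_iff_mem.2 hu, zero_add]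
  have e1 := LinearMap.finrank_range_add_finrank_ker q
  rw [LinearMap.range_eq_top.2 hq, finrank_top, finrank_quot, card_lowIdx_succ] at e1
  have e2 := (Submodule.finrank_mono hle).trans (LinearMap.finrank_range_le μ)
  rw [finrank_quot] at e2
  change n + 1 ≤ Module.finrank ℂ (A2 ⧸ J)
  omega

lemma maxI_coprime {P Q : Fin 2 → ℂ} (h : P ≠ Q) : IsCoprime (maxI P) (maxI Q) := by
  rw [Ideal.isCoprime_iff_exists]
  obtain ⟨i, hi⟩ := Function.ne_iff.1 h
  have hi' : Q i - P i ≠ 0 := sub_ne_zero.2 (Ne.symm hi)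
  refine ⟨C (Q i - P i)⁻¹ * (X i - C (P i)), Ideal.mul_mem_left _ _ (Ideal.subset_span ⟨i, rfl⟩),
    -(C (Q i - P i)⁻¹ * (X i - C (Q i))),
    Submodule.neg_mem _ (Ideal.mul_mem_left _ _ (Ideal.subset_span ⟨i, rfl⟩)), ?_⟩
  have : C (Q i - P i)⁻¹ * (X i - C (P i)) + -(C (Q i - P i)⁻¹ * (X i - C (Q i))) =
    (C ((Q i - P i)⁻¹ * (Q i - P i)) : A2) := by
    rw [C_mul, C_sub]; ring
  rw [this, inv_mul_cancel₀ hi', C_1]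

lemma affine_bezout (W : Finset (Fin 2 → ℂ)) (F G : A2) (m : ℕ) (hG : G ≠ 0)
    (h : IsRelPrime F G) (hF : ∀ P ∈ W, F ∈ maxI P ^ m) (hGW : ∀ P ∈ W, eval P G = 0) :
    W.card * m ≤ degreeOf 0 F * degreeOf 1 G + degreeOf 0 G * degreeOf 1 F := by
  let J : W → Ideal A2 := fun P => maxI P.1 ^ m ⊔ Ideal.span {G}
  have hJ : Pairwise fun i j => IsCoprime (J i) (J j) := by
    intro P Q hPQ
    have h1 : IsCoprime (maxI P.1 ^ m) (maxI Q.1 ^ m) :=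
      (maxI_coprime fun h => hPQ (Subtype.ext h)).pow
    rw [Ideal.isCoprime_iff_sup_eq] at h1 ⊢
    rw [eq_top_iff, ← h1]
    exact sup_le_sup le_sup_left le_sup_left
  let π : A2 →ₗ[ℂ] (∀ P : W, A2 ⧸ J P) :=
    LinearMap.pi fun P => (Ideal.Quotient.mkₐ ℂ (J P)).toLinearMap
  have hfin : ∀ P : W, FiniteDimensional ℂ (A2 ⧸ J P) := fun P => finite_loc P.1 m G
  have hπ : Function.Surjective π := by
    intro t
    obtain ⟨r, hr⟩ := Ideal.pi_quotient_surjective hJ t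
    exact ⟨r, funext hr⟩
  have key := bezout_aux F G hG h π hπ ?_ ?_
  · rw [Module.finrank_pi_fintype] at key
    refine le_trans ?_ key
    calc W.card * m = ∑ _P : W, m := by simp
      _ ≤ _ := Finset.sum_le_sum fun P _ =>
        finrank_loc P.1 m G ((mem_maxI_iff _ _).2 (hGW P.1 P.2))
  · intro u
    funext P
    change Ideal.Quotient.mk (J P) (u * F) = 0
    rw [Ideal.Quotient.eq_zero_iff_mem]
    exact Ideal.mul_mem_left _ _ (Ideal.mem_sup_left (hF P.1 P.2))
  · intro u
    funext P
    change Ideal.Quotient.mk (J P) (u * G) = 0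
    rw [Ideal.Quotient.eq_zero_iff_mem]
    exact Ideal.mul_mem_left _ _ (Ideal.mem_sup_right (Ideal.mem_span_singleton_self G))

/-- A minimal set of points detecting the zero element of `boxV a a`. -/
lemma exists_minimal (Z : Finset (Fin 2 → ℂ)) (a : ℕ)
    (hZ : ∀ f ∈ boxV a a, (∀ P ∈ Z, eval P f = 0) → f = 0) :
    ∃ W ⊆ Z, (a+1)*(a+1) ≤ W.card ∧ (∃ Cf : (Fin 2 → ℂ) → A2,
      (∀ P ∈ W, Cf P ∈ boxV a a ∧ Cf P ≠ 0 ∧ ∀ Q ∈ W, Q ≠ P → eval Q (Cf P) = 0) ∧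
      (∀ H : A2, (∀ P ∈ W, H ∣ Cf P) → H ∣ 1)) := by
  classical
  let good : Finset (Fin 2 → ℂ) → Prop :=
    fun W => ∀ f ∈ boxV a a, (∀ P ∈ W, eval P f = 0) → f = 0
  obtain ⟨W, hW, hmin⟩ := Finset.exists_min_image (Z.powerset.filter good) Finset.card
    ⟨Z, by simp [good]; exact hZ⟩
  rw [Finset.mem_filter, Finset.mem_powerset] at hW
  have hWg : good W := hW.2
  refine ⟨W, hW.1, ?_, ?_⟩
  · let ev : boxV a a →ₗ[ℂ] (W → ℂ) :=
      LinearMap.pi fun P => (aeval (R := ℂ) P.1).toLinearMap.domRestrict (boxV a a)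
    have hev : Function.Injective ev := by
      rw [← LinearMap.ker_eq_bot, LinearMap.ker_eq_bot']
      intro f hf
      apply Subtype.ext
      refine hWg f.1 f.2 fun P hP => ?_
      have := congrFun hf ⟨P, hP⟩
      simpa [ev, aeval_eq_eval] using this
    have := LinearMap.finrank_le_finrank_of_injective hev
    rw [finrank_boxV] at this
    simpa using this
  · have hex : ∀ P, ∃ f : A2, P ∈ W →
        f ∈ boxV a a ∧ f ≠ 0 ∧ ∀ Q ∈ W, Q ≠ P → eval Q f = 0 := by
      intro P
      by_cases hP : P ∈ W
      · have hng : ¬ good (W.erase P) := by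
          intro hg
          have := hmin (W.erase P) (by
            rw [Finset.mem_filter, Finset.mem_powerset]
            exact ⟨(Finset.erase_subset _ _).trans hW.1, hg⟩)
          exact absurd (Finset.card_erase_lt_of_mem hP) (not_lt.2 this)
        simp only [good, not_forall] at hng
        obtain ⟨f, hf, hf1, hf0⟩ := hng
        exact ⟨f, fun _ => ⟨hf, hf0, fun Q hQ hQP => hf1 Q (Finset.mem_erase.2 ⟨hQP, hQ⟩)⟩⟩
      · exact ⟨0, fun h => absurd h hP⟩
    choose Cf hCf using hex
    refine ⟨Cf, fun P hP => hCf P hP, fun H hH => ?_⟩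
    have hne : ∀ P ∈ W, eval P (Cf P) ≠ 0 := by
      intro P hP h0
      obtain ⟨h1, h2, h3⟩ := hCf P hP
      refine h2 (hWg _ h1 fun Q hQ => ?_)
      by_cases hQP : Q = P
      · rw [hQP, h0]
      · exact h3 Q hQ hQP
    have hsum : (1 : A2) - ∑ P ∈ W, C (eval P (Cf P))⁻¹ * Cf P = 0 := by
      apply hWg
      · refine Submodule.sub_mem _ ?_ (Submodule.sum_mem _ fun P hP => ?_)
        · rw [mem_boxV, ← C_1, degreeOf_C, degreeOf_C]; simp
        · rw [C_mul']
          exact Submodule.smul_mem _ _ (hCf P hP).1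
      · intro Q hQ
        rw [map_sub, map_sum, Finset.sum_eq_single_of_mem Q hQ]
        · simp [hne Q hQ]
        · intro P hP hPQ
          rw [map_mul, (hCf P hP).2.2 Q hQ (Ne.symm hPQ), mul_zero]
    rw [sub_eq_zero.1 hsum]
    exact Finset.dvd_sum fun P hP => Dvd.dvd.mul_left (hH P hP) _

lemma relPrime_lin (P : Fin 2 → ℂ) :
    IsRelPrime (X 0 - C (P 0) : A2) (X 1 - C (P 1)) := by
  intro z hz0 hz1
  have n0 : (X 0 - C (P 0) : A2) ≠ 0 := by
    intro h
    have := congrArg (eval fun _ => P 0 + 1) h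
    simp at this
  have n1 : (X 1 - C (P 1) : A2) ≠ 0 := by
    intro h
    have := congrArg (eval fun _ => P 1 + 1) h
    simp at this
  have hb0 : (X 0 - C (P 0) : A2) ∈ boxV 1 0 := by
    refine Submodule.sub_mem _ ?_ ?_
    · rw [mem_boxV]; simp [degreeOf_X]
    · rw [mem_boxV]; simp [degreeOf_C]
  have hb1 : (X 1 - C (P 1) : A2) ∈ boxV 0 1 := by
    refine Submodule.sub_mem _ ?_ ?_
    · rw [mem_boxV]; simp [degreeOf_X]
    · rw [mem_boxV]; simp [degreeOf_C]
  rw [mem_boxV] at hb0 hb1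
  obtain ⟨u, hu⟩ := hz0
  obtain ⟨v, hv⟩ := hz1
  rw [hu] at hb0 n0
  rw [hv] at hb1 n1
  rw [degreeOf_mul_eq (left_ne_zero_of_mul n0) (right_ne_zero_of_mul n0),
    degreeOf_mul_eq (left_ne_zero_of_mul n0) (right_ne_zero_of_mul n0)] at hb0
  rw [degreeOf_mul_eq (left_ne_zero_of_mul n1) (right_ne_zero_of_mul n1),
    degreeOf_mul_eq (left_ne_zero_of_mul n1) (right_ne_zero_of_mul n1)] at hb1
  have hz : z ∈ boxV 0 0 := mem_boxV.2 ⟨by omega, by omega⟩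
  have hzC : z = C (coeff 0 z) := by
    ext v
    rw [coeff_C]
    split_ifs with hv0
    · rw [hv0]
    · by_contra hc
      have := hz (mem_support_iff.2 hc)
      apply hv0
      ext i
      simp only [Set.mem_ofPred_eq] at this
      fin_cases i <;> simp <;> omega
  rw [hzC]
  have hc0 : coeff 0 z ≠ 0 := by
    intro h0
    rw [h0, C_0] at hzC
    exact left_ne_zero_of_mul n0 hzC
  exact (isUnit_iff_ne_zero.2 hc0).map C

lemma affine_main (Z : Finset (Fin 2 → ℂ)) (a d m : ℕ)
    (hZ : ∀ f ∈ boxV a a, (∀ P ∈ Z, eval P f = 0) → f = 0)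
    (F : A2) (hF0 : F ≠ 0) (hF : F ∈ boxV d d) (hFm : ∀ P ∈ Z, F ∈ maxI P ^ m) :
    m * (a+1) ≤ 2 * d := by
  classical
  obtain ⟨W, hWZ, hcard, Cf, hCf, hone⟩ := exists_minimal Z a hZ
  let S : Submodule ℂ A2 := boxV (a+1) (a+1) ⊓ ⨅ P ∈ W, (maxI P).restrictScalars ℂ
  have hS : ∀ f, f ∈ S ↔ f ∈ boxV (a+1) (a+1) ∧ ∀ P ∈ W, eval P f = 0 := by
    intro f
    simp [S, Submodule.mem_iInf, mem_maxI_iff]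
  let D : A2 → Submodule ℂ S := fun H =>
    ((Ideal.span {H}).restrictScalars ℂ).comap S.subtype
  have hD : ∀ H (f : S), f ∈ D H ↔ H ∣ f.1 := by
    intro H f
    simp [D, Ideal.mem_span_singleton]
  have hmemS : ∀ P ∈ W, ∀ i, (X i - C (P i)) * Cf P ∈ S := by
    intro P hP i
    rw [hS]
    obtain ⟨h1, h2, h3⟩ := hCf P hP
    constructor
    · rw [add_comm a 1]
      refine mul_mem_boxV (Submodule.sub_mem _ ?_ ?_) h1
      · rw [mem_boxV, degreeOf_X, degreeOf_X]
        constructor <;> split_ifs <;> simp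
      · rw [mem_boxV]; simp [degreeOf_C]
    · intro Q hQ
      by_cases hQP : Q = P
      · simp [hQP]
      · rw [map_mul, h3 Q hQ hQP, mul_zero]
  have hDtop : ∀ H, (Prime H ∨ H = 0) → D H ≠ ⊤ := by
    intro H hH htop
    have hdv : ∀ f ∈ S, H ∣ f := fun f hf => by
      have : (⟨f, hf⟩ : S) ∈ D H := by rw [htop]; trivial
      exact (hD _ _).1 this
    have hH1 : H ∣ 1 := by
      refine hone H fun P hP => ?_
      have h0 := hdv _ (hmemS P hP 0)
      have h1 := hdv _ (hmemS P hP 1)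
      rcases hH with hH | rfl
      · rcases hH.dvd_or_dvd h0 with h0 | h0
        · rcases hH.dvd_or_dvd h1 with h1 | h1
          · exact absurd (relPrime_lin P h0 h1) hH.not_isUnit
          · exact h1
        · exact h0
      · rw [zero_dvd_iff, mul_eq_zero] at h0 h1
        rcases h0 with h0 | h0
        · rcases h1 with h1 | h1
          · have := relPrime_lin P (d := 0) (by rw [h0]) (by rw [h1])
            exact absurd this not_isUnit_zero
          · rw [h1]
        · rw [h0]
    rcases hH with hH | rfl
    · exact hH.not_isUnit (isUnit_of_dvd_one hH1)
    · exact one_ne_zero (zero_dvd_iff.1 hH1)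
  let fs : Finset A2 := insert 0 (UniqueFactorizationMonoid.factors F).toFinset
  have hcov : ⊤ ∉ fs.image D := by
    intro ht
    obtain ⟨H, hH, hHt⟩ := Finset.mem_image.1 ht
    refine hDtop H ?_ hHt
    rcases Finset.mem_insert.1 hH with h | h
    · exact Or.inr h
    · exact Or.inl (UniqueFactorizationMonoid.prime_of_factor _ (Multiset.mem_toFinset.1 h))
  have hne := Subspace.biUnion_ne_univ_of_top_notMem hcov
  obtain ⟨G, hG⟩ := (Set.ne_univ_iff_exists_notMem _).1 hne
  have hGn : ∀ H ∈ fs, ¬ H ∣ G.1 := by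
    intro H hH hd
    apply hG
    simp only [Set.mem_iUnion]
    exact ⟨D H, Finset.mem_image_of_mem _ hH, (hD _ _).2 hd⟩
  have hG0 : G.1 ≠ 0 := fun h => hGn 0 (Finset.mem_insert_self _ _) (by rw [h])
  have hrel : IsRelPrime F G.1 := by
    refine WfDvdMonoid.isRelPrime_of_no_irreducible_factors (fun h => hF0 h.1) ?_
    intro z hz hzF hzG
    obtain ⟨q, hq, hzq⟩ := UniqueFactorizationMonoid.exists_mem_factors_of_dvd hF0 hz hzF
    exact hGn q (Finset.mem_insert_of_mem (Multiset.mem_toFinset.2 hq))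
      (hzq.symm.dvd.trans hzG)
  obtain ⟨hGb, hGv⟩ := (hS G.1).1 G.2
  have key := affine_bezout W F G.1 m hG0 hrel (fun P hP => hFm P (hWZ hP)) hGv
  rw [mem_boxV] at hF hGb
  have k1 : degreeOf 0 F * degreeOf 1 G.1 + degreeOf 0 G.1 * degreeOf 1 F ≤
      d * (a+1) + (a+1) * d :=
    add_le_add (Nat.mul_le_mul hF.1 hGb.2) (Nat.mul_le_mul hGb.1 hF.2)
  have k2 := Nat.mul_le_mul_right m hcard
  have k3 : (a+1) * (m * (a+1)) ≤ (a+1) * (2 * d) := by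
    calc (a+1) * (m * (a+1)) = (a+1)*(a+1)*m := by ring
      _ ≤ d * (a+1) + (a+1) * d := k2.trans (key.trans k1)
      _ = _ := by ring
  exact Nat.le_of_mul_le_mul_left k3 (Nat.succ_pos a)

def affP (c : ℂ) (P : ProjLine × ProjLine) : Fin 2 → ℂ :=
  ![P.1.rep 0 / (P.1.rep 1 - c * P.1.rep 0), P.2.rep 0 / (P.2.rep 1 - c * P.2.rep 0)]

lemma exists_chart (Z : Finset (ProjLine × ProjLine)) :
    ∃ c : ℂ, ∀ P ∈ Z, P.1.rep 1 - c * P.1.rep 0 ≠ 0 ∧ P.2.rep 1 - c * P.2.rep 0 ≠ 0 := by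
  classical
  obtain ⟨c, hc⟩ := Infinite.exists_notMem_finset
    (Z.image (fun P => P.1.rep 1 / P.1.rep 0) ∪ Z.image (fun P => P.2.rep 1 / P.2.rep 0))
  rw [Finset.mem_union, not_or] at hc
  have aux : ∀ v : ProjLine, v.rep 1 - c * v.rep 0 = 0 → v.rep 1 / v.rep 0 = c := by
    intro v hv
    by_cases h0 : v.rep 0 = 0
    · exfalso
      apply v.rep_nonzero
      ext i
      rw [h0, mul_zero, sub_zero] at hv
      fin_cases i
      · exact h0
      · exact hv
    · rw [div_eq_iff h0]
      linear_combination hv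
  refine ⟨c, fun P hP => ⟨fun h => hc.1 ?_, fun h => hc.2 ?_⟩⟩
  · exact Finset.mem_image.2 ⟨P, hP, aux _ h⟩
  · exact Finset.mem_image.2 ⟨P, hP, aux _ h⟩

def dehom (c : ℂ) : R4 →ₐ[ℂ] A2 :=
  aeval (Sum.elim ![X 0, 1 + C c * X 0] ![X 1, 1 + C c * X 1])

lemma map_pointIdeal_le (c : ℂ) (P : ProjLine × ProjLine)
    (h1 : P.1.rep 1 - c * P.1.rep 0 ≠ 0) (h2 : P.2.rep 1 - c * P.2.rep 0 ≠ 0) :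
    (pointIdeal P).map (dehom c : R4 →+* A2) ≤ maxI (affP c P) := by
  rw [pointIdeal, Ideal.map_span, Ideal.span_le]
  rintro _ ⟨g, hg, rfl⟩
  rw [SetLike.mem_coe, mem_maxI_iff]
  rcases hg with rfl | rfl
  · simp only [dehom, affP, AlgHom.coe_toRingHom, RingHom.coe_coe, map_sub, map_mul, aeval_X, aeval_C, algebraMap_eq,
      eval_C, eval_X, Sum.elim_inl, Sum.elim_inr, Matrix.cons_val_zero, Matrix.cons_val_one,
      map_add, map_one]
    linear_combination (P.1.rep 0) * (mul_inv_cancel₀ h1)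
  · simp only [dehom, affP, AlgHom.coe_toRingHom, RingHom.coe_coe, map_sub, map_mul, aeval_X, aeval_C, algebraMap_eq,
      eval_C, eval_X, Sum.elim_inl, Sum.elim_inr, Matrix.cons_val_zero, Matrix.cons_val_one,
      map_add, map_one]
    linear_combination (P.2.rep 0) * (mul_inv_cancel₀ h2)

lemma biForm_support {F : R4} {p q : ℕ} (hF : IsBiForm F p q) {v : Fin 2 ⊕ Fin 2 →₀ ℕ}
    (hv : v ∈ F.support) :
    v (Sum.inl 0) + v (Sum.inl 1) = p ∧ v (Sum.inr 0) + v (Sum.inr 1) = q := by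
  have h := hF (mem_support_iff.1 hv)
  rw [Finsupp.weight_apply, Finsupp.sum_fintype _ _ (by simp)] at h
  simp only [Fintype.sum_sum_type, Fin.sum_univ_two, biWeight, Sum.elim_inl, Sum.elim_inr] at h
  have ha := congrArg Prod.fst h
  have hb := congrArg Prod.snd h
  simp only [Prod.fst_add, Prod.snd_add, Prod.smul_fst, Prod.smul_snd, smul_eq_mul] at ha hb
  omega

lemma pow_mem_boxV {p q : ℕ} {f : A2} (hf : f ∈ boxV p q) (n : ℕ) :
    f ^ n ∈ boxV (n * p) (n * q) := by
  rw [mem_boxV] at *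
  exact ⟨(degreeOf_pow_le 0 f n).trans (Nat.mul_le_mul_left n hf.1),
    (degreeOf_pow_le 1 f n).trans (Nat.mul_le_mul_left n hf.2)⟩

lemma C_mem_boxV (p q : ℕ) (r : ℂ) : (C r : A2) ∈ boxV p q := by
  rw [mem_boxV, degreeOf_C, degreeOf_C]; simp

lemma X0_mem_boxV : (X 0 : A2) ∈ boxV 1 0 := by
  rw [mem_boxV]; simp [degreeOf_X]

lemma X1_mem_boxV : (X 1 : A2) ∈ boxV 0 1 := by
  rw [mem_boxV]; simp [degreeOf_X]

lemma dehom_mem_boxV (c : ℂ) {F : R4} {p q : ℕ} (hF : IsBiForm F p q) :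
    dehom c F ∈ boxV p q := by
  rw [dehom, aeval_def, eval₂_eq']
  refine Submodule.sum_mem _ fun v hv => ?_
  obtain ⟨h1, h2⟩ := biForm_support hF hv
  rw [Fintype.prod_sum_type, Fin.prod_univ_two, Fin.prod_univ_two]
  simp only [Sum.elim_inl, Sum.elim_inr, Matrix.cons_val_zero, Matrix.cons_val_one,
    algebraMap_eq]
  have a0 : (1 + C c * X 0 : A2) ∈ boxV 1 0 := by
    rw [← C_1, C_mul']
    exact Submodule.add_mem _ (C_mem_boxV _ _ _) (Submodule.smul_mem _ _ X0_mem_boxV)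
  have a1 : (1 + C c * X 1 : A2) ∈ boxV 0 1 := by
    rw [← C_1, C_mul']
    exact Submodule.add_mem _ (C_mem_boxV _ _ _) (Submodule.smul_mem _ _ X1_mem_boxV)
  have := mul_mem_boxV (C_mem_boxV 0 0 (coeff v F)) (mul_mem_boxV
    (mul_mem_boxV (pow_mem_boxV X0_mem_boxV (v (Sum.inl 0))) (pow_mem_boxV a0 (v (Sum.inl 1))))
    (mul_mem_boxV (pow_mem_boxV X1_mem_boxV (v (Sum.inr 0))) (pow_mem_boxV a1 (v (Sum.inr 1)))))
  exact boxV_mono (by omega) (by omega) this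

lemma eval_scale {F : R4} {p q : ℕ} (hF : IsBiForm F p q) (s t : ℂ) (x y : Fin 2 → ℂ) :
    eval (Sum.elim (fun i => s * x i) (fun i => t * y i)) F =
      s ^ p * t ^ q * eval (Sum.elim x y) F := by
  rw [eval_eq', eval_eq', Finset.mul_sum]
  refine Finset.sum_congr rfl fun v hv => ?_
  obtain ⟨h1, h2⟩ := biForm_support hF hv
  simp only [Fintype.prod_sum_type, Fin.prod_univ_two, Sum.elim_inl, Sum.elim_inr]
  rw [← h1, ← h2]
  ring

lemma dehom_ne_zero (c : ℂ) {F : R4} {p q : ℕ} (hF : IsBiForm F p q) (h0 : F ≠ 0) :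
    dehom c F ≠ 0 := by
  intro hz
  let L : R4 := X (Sum.inl 1) - C c * X (Sum.inl 0)
  let L' : R4 := X (Sum.inr 1) - C c * X (Sum.inr 0)
  have hL : L ≠ 0 := by
    intro h
    have := congrArg (eval (Sum.elim ![0, 1] ![0, 1])) h
    simp [L] at this
  have hL' : L' ≠ 0 := by
    intro h
    have := congrArg (eval (Sum.elim ![0, 1] ![0, 1])) h
    simp [L'] at this
  have hev : ∀ x y : ℂ, eval (Sum.elim ![x, 1 + c * x] ![y, 1 + c * y]) F = 0 := by
    intro x y
    have h1 := congrArg (eval ![x, y]) hz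
    have h2 : (eval ![x, y]).comp (dehom c : R4 →+* A2) =
        eval (Sum.elim ![x, 1 + c * x] ![y, 1 + c * y]) := by
      ext i
      · simp
      · rcases i with i | i <;> fin_cases i <;> simp [dehom]
    have h3 := congrArg (fun φ => φ F) h2
    rw [map_zero] at h1
    rw [← h1]
    exact h3.symm
  have hprod : F * (L * L') = 0 := by
    apply MvPolynomial.funext
    intro w
    rw [map_mul, map_mul, map_zero]
    by_cases hs : eval w L = 0
    · rw [hs]; ring
    by_cases ht : eval w L' = 0
    · rw [ht]; ring
    have hs' : eval w L = w (Sum.inl 1) - c * w (Sum.inl 0) := by simp [L]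
    have ht' : eval w L' = w (Sum.inr 1) - c * w (Sum.inr 0) := by simp [L']
    have hw : w = Sum.elim
        (fun i => eval w L * (![w (Sum.inl 0) / eval w L, 1 + c * (w (Sum.inl 0) / eval w L)] :
          Fin 2 → ℂ) i)
        (fun i => eval w L' * (![w (Sum.inr 0) / eval w L', 1 + c * (w (Sum.inr 0) / eval w L')] :
          Fin 2 → ℂ) i) := by
      ext i
      rcases i with i | i <;> fin_cases i
      · simp; field_simp
      · simp; field_simp; rw [hs']; ring
      · simp; field_simp
      · simp; field_simp; rw [ht']; ring
    have hF0 : eval w F = 0 := by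
      conv_lhs => rw [hw]
      rw [eval_scale hF, hev, mul_zero]
    rw [hF0, zero_mul]
  exact mul_ne_zero h0 (mul_ne_zero hL hL') hprod

def homog (c : ℂ) (b : ℕ) (f : A2) : R4 :=
  ∑ v ∈ f.support, C (coeff v f) *
    ((X (Sum.inl 0) ^ v 0 * (X (Sum.inl 1) - C c * X (Sum.inl 0)) ^ (b - v 0)) *
     (X (Sum.inr 0) ^ v 1 * (X (Sum.inr 1) - C c * X (Sum.inr 0)) ^ (b - v 1)))

lemma lin_inl (i : Fin 2) : IsBiForm (X (Sum.inl i)) 1 0 := isWeightedHomogeneous_X _ _ _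
lemma lin_inr (i : Fin 2) : IsBiForm (X (Sum.inr i)) 0 1 := isWeightedHomogeneous_X _ _ _

lemma IsBiForm.mul' {F G : R4} {p q p' q' : ℕ} (hF : IsBiForm F p q) (hG : IsBiForm G p' q') :
    IsBiForm (F * G) (p + p') (q + q') := IsWeightedHomogeneous.mul hF hG

lemma IsBiForm.pow' {F : R4} {p q : ℕ} (hF : IsBiForm F p q) (n : ℕ) :
    IsBiForm (F ^ n) (n * p) (n * q) := IsWeightedHomogeneous.pow hF n

lemma IsBiForm.sub' {F G : R4} {p q : ℕ} (hF : IsBiForm F p q) (hG : IsBiForm G p q) :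
    IsBiForm (F - G) p q :=
  (weightedHomogeneousSubmodule ℂ biWeight (p, q)).sub_mem hF hG

lemma IsBiForm.Cmul {F : R4} {p q : ℕ} (hF : IsBiForm F p q) (r : ℂ) :
    IsBiForm (C r * F) p q := by
  rw [C_mul']
  exact (weightedHomogeneousSubmodule ℂ biWeight (p, q)).smul_mem r hF

lemma homog_biForm (c : ℂ) (b : ℕ) {f : A2} (hf : f ∈ boxV b b) : IsBiForm (homog c b f) b b := by
  refine (weightedHomogeneousSubmodule ℂ biWeight (b, b)).sum_mem fun v hv => ?_
  obtain ⟨h0, h1⟩ := hf hv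
  have := (((lin_inl 0).pow' (v 0)).mul'
    ((((lin_inl 1).sub' ((lin_inl 0).Cmul c))).pow' (b - v 0))).mul'
    (((lin_inr 0).pow' (v 1)).mul' ((((lin_inr 1).sub' ((lin_inr 0).Cmul c))).pow' (b - v 1)))
  have h := this.Cmul (coeff v f)
  have e1 : v 0 * 1 + (b - v 0) * 1 + (v 1 * 0 + (b - v 1) * 0) = b := by omega
  have e2 : v 0 * 0 + (b - v 0) * 0 + (v 1 * 1 + (b - v 1) * 1) = b := by omega
  rw [e1, e2] at h
  exact h

lemma dehom_homog (c : ℂ) (b : ℕ) (f : A2) : dehom c (homog c b f) = f := by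
  conv_rhs => rw [f.as_sum]
  rw [homog, map_sum]
  refine Finset.sum_congr rfl fun v _ => ?_
  rw [monomial_eq, Finsupp.prod_fintype _ _ (by simp), Fin.prod_univ_two]
  simp [dehom]

lemma homog_mem (c : ℂ) (b : ℕ) {f : A2} (hf : f ∈ boxV b b) (P : ProjLine × ProjLine)
    (h1 : P.1.rep 1 - c * P.1.rep 0 ≠ 0) (h2 : P.2.rep 1 - c * P.2.rep 0 ≠ 0)
    (hP : eval (affP c P) f = 0) : homog c b f ∈ pointIdeal P := by
  rw [← Ideal.Quotient.eq_zero_iff_mem]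
  set mk := Ideal.Quotient.mk (pointIdeal P) with hmk
  have r1 : mk (X (Sum.inl 0)) =
      mk (C (affP c P 0)) * mk (X (Sum.inl 1) - C c * X (Sum.inl 0)) := by
    rw [← map_mul, hmk, Ideal.Quotient.eq]
    have : (X (Sum.inl 0) - C (affP c P 0) * (X (Sum.inl 1) - C c * X (Sum.inl 0)) : R4) =
        C (P.1.rep 1 - c * P.1.rep 0)⁻¹ *
        (C (P.1.rep 1) * X (Sum.inl 0) - C (P.1.rep 0) * X (Sum.inl 1)) := by
      have e : (C (P.1.rep 1 - c * P.1.rep 0)⁻¹ * (C (P.1.rep 1) - C c * C (P.1.rep 0)) : R4) = 1 := by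
        rw [← C_mul, ← C_sub, ← C_mul, inv_mul_cancel₀ h1, C_1]
      have e' : (C (affP c P 0) : R4) = C (P.1.rep 1 - c * P.1.rep 0)⁻¹ * C (P.1.rep 0) := by
        rw [← C_mul]; congr 1; simp [affP]; field_simp
      rw [e']
      linear_combination (-X (Sum.inl 0)) * e
    rw [this]
    exact Ideal.mul_mem_left _ _ (Ideal.subset_span (Set.mem_insert _ _))
  have r2 : mk (X (Sum.inr 0)) =
      mk (C (affP c P 1)) * mk (X (Sum.inr 1) - C c * X (Sum.inr 0)) := by
    rw [← map_mul, hmk, Ideal.Quotient.eq]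
    have : (X (Sum.inr 0) - C (affP c P 1) * (X (Sum.inr 1) - C c * X (Sum.inr 0)) : R4) =
        C (P.2.rep 1 - c * P.2.rep 0)⁻¹ *
        (C (P.2.rep 1) * X (Sum.inr 0) - C (P.2.rep 0) * X (Sum.inr 1)) := by
      have e : (C (P.2.rep 1 - c * P.2.rep 0)⁻¹ * (C (P.2.rep 1) - C c * C (P.2.rep 0)) : R4) = 1 := by
        rw [← C_mul, ← C_sub, ← C_mul, inv_mul_cancel₀ h2, C_1]
      have e' : (C (affP c P 1) : R4) = C (P.2.rep 1 - c * P.2.rep 0)⁻¹ * C (P.2.rep 0) := by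
        rw [← C_mul]; congr 1; simp [affP]; field_simp
      rw [e']
      linear_combination (-X (Sum.inr 0)) * e
    rw [this]
    exact Ideal.mul_mem_left _ _ (Ideal.subset_span (Set.mem_insert_of_mem _ rfl))
  set l1 := mk (X (Sum.inl 1) - C c * X (Sum.inl 0))
  set l2 := mk (X (Sum.inr 1) - C c * X (Sum.inr 0))
  have : mk (homog c b f) = mk (C (eval (affP c P) f)) * (l1 ^ b * l2 ^ b) := by
    rw [homog, map_sum, eval_eq', map_sum C, map_sum mk, Finset.sum_mul]
    refine Finset.sum_congr rfl fun v hv => ?_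
    obtain ⟨h0, h1⟩ := hf hv
    rw [map_mul, map_mul, map_mul, map_mul, map_pow, map_pow, map_pow, map_pow, r1, r2,
      Fin.prod_univ_two]
    simp only [map_mul, map_pow]
    change _ * ((_ * l1 ^ _) * (_ * l2 ^ _)) = _
    have e1 : l1 ^ b = l1 ^ v 0 * l1 ^ (b - v 0) := by rw [← pow_add]; congr 1; omega
    have e2 : l2 ^ b = l2 ^ v 1 * l2 ^ (b - v 1) := by rw [← pow_add]; congr 1; omega
    rw [e1, e2]
    ring
  rw [this, hP, C_0, map_zero, zero_mul]

lemma alpha_nonempty (Z : Finset (ProjLine × ProjLine)) (m : ℕ) :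
    {t : ℕ | ∃ F ∈ symbPow Z m, F ≠ 0 ∧ IsBiForm F t t}.Nonempty := by
  classical
  let g : ProjLine × ProjLine → R4 := fun P =>
    (C (P.1.rep 1) * X (Sum.inl 0) - C (P.1.rep 0) * X (Sum.inl 1)) *
    (C (P.2.rep 1) * X (Sum.inr 0) - C (P.2.rep 0) * X (Sum.inr 1))
  have hg : ∀ P, IsBiForm (g P) 1 1 := fun P =>
    (((lin_inl 0).Cmul _).sub' ((lin_inl 1).Cmul _)).mul'
      (((lin_inr 0).Cmul _).sub' ((lin_inr 1).Cmul _))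
  have aux : ∀ (v : ProjLine) (j : Fin 2 → Fin 2 ⊕ Fin 2), Function.Injective j →
      (C (v.rep 1) * X (j 0) - C (v.rep 0) * X (j 1) : R4) ≠ 0 := by
    intro v j hj h
    apply v.rep_nonzero
    have hne : j 0 ≠ j 1 := fun h => by simpa using hj h
    have e0 := congrArg (eval (Pi.single (j 0) 1)) h
    have e1 := congrArg (eval (Pi.single (j 1) 1)) h
    simp [hne, hne.symm] at e0 e1
    ext i
    fin_cases i
    · exact e1
    · exact e0
  have hg0 : ∀ P, g P ≠ 0 := fun P => mul_ne_zero
    (aux P.1 Sum.inl Sum.inl_injective) (aux P.2 Sum.inr Sum.inr_injective)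
  refine ⟨m * Z.card, (∏ P ∈ Z, g P) ^ m, ?_, pow_ne_zero _ (Finset.prod_ne_zero_iff.2
    fun P _ => hg0 P), ?_⟩
  · simp only [symbPow, Submodule.mem_iInf]
    intro P hP
    refine Ideal.pow_mem_pow ?_ m
    refine Ideal.mem_of_dvd _ (Finset.dvd_prod_of_mem g hP) ?_
    exact Ideal.mul_mem_right _ _ (Ideal.subset_span (Set.mem_insert _ _))
  · apply IsBiForm.pow'
    induction Z using Finset.induction_on with
    | empty => exact isWeightedHomogeneous_one ℂ biWeight
    | insert P s hP ih =>
      rw [Finset.prod_insert hP, Finset.card_insert_of_notMem hP, add_comm]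
      exact (hg P).mul' ih

/-- Chudnovsky-type theorem for `ℙ¹ × ℙ¹`: for the radical ideal `I` of a finite set of
mutually distinct points of `ℙ¹ × ℙ¹` and every `m ≥ 1`, `α*(I^{(m)})/m ≥ α*(I)/2`;
equivalently `2·α*(I^{(m)}) ≥ m·α*(I)`. -/
theorem chudnovsky_P1xP1 (Z : Finset (ProjLine × ProjLine)) (m : ℕ) (hm : 1 ≤ m) :
    m * alphaStar (symbPow Z 1) ≤ 2 * alphaStar (symbPow Z m) := by
  classical
  rcases Nat.eq_zero_or_pos (alphaStar (symbPow Z 1)) with h0 | hpos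
  · rw [h0, mul_zero]; exact Nat.zero_le _
  obtain ⟨b, hb⟩ := Nat.exists_eq_succ_of_ne_zero hpos.ne'
  obtain ⟨F, hFI, hF0, hF⟩ := Nat.sInf_mem (alpha_nonempty Z m)
  change IsBiForm F (alphaStar (symbPow Z m)) (alphaStar (symbPow Z m)) at hF
  obtain ⟨c, hc⟩ := exists_chart Z
  rw [hb]
  refine affine_main (Z.image (affP c)) b _ m ?_ (dehom c F) (dehom_ne_zero c hF hF0)
    (dehom_mem_boxV c hF) ?_
  · intro f hf hfv
    by_contra hf0
    have hmem : homog c b f ∈ symbPow Z 1 := by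
      simp only [symbPow, Submodule.mem_iInf, pow_one]
      intro P hP
      exact homog_mem c b hf P (hc P hP).1 (hc P hP).2 (hfv _ (Finset.mem_image_of_mem _ hP))
    have hle : alphaStar (symbPow Z 1) ≤ b := Nat.sInf_le ⟨homog c b f, hmem, fun h => hf0 (by
      rw [← dehom_homog c b f, h, map_zero]), homog_biForm c b hf⟩
    omega
  · intro Q hQ
    obtain ⟨P, hP, rfl⟩ := Finset.mem_image.1 hQ
    simp only [symbPow, Submodule.mem_iInf] at hFI
    have h1 := Ideal.mem_map_of_mem (dehom c : R4 →+* A2) (hFI P hP)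
    rw [Ideal.map_pow] at h1
    exact Ideal.pow_right_mono (map_pointIdeal_le c P (hc P hP).1 (hc P hP).2) m h1
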